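/- arXiv:1912.04113 — 5 statements merged into one kernel-verified Lean document; each statement's English description precedes it below -/
import Mathlib

section
/- Let a ∈ ℝ and let u : (a,∞) → ℝ be twice continuously differentiable with u''(x) + u(x)² = 0 for all x > a, u(x) → 0 and u'(x) → 0 as x → ∞, and u not identically zero on (a,∞). Then there exists a constant x₀ with x₀ ≥ −a such that u(x) = −6/(x + x₀)² for all x > a. -/
open Filter

theorem mono_aux (b : ℝ) (f f' : ℝ → ℝ) (h : ∀ x ∈ Set.Ioi b, HasDerivAt f (f' x) x)
    (hp : ∀ x ∈ Set.Ioi b, 0 ≤ f' x) : MonotoneOn f (Set.Ioi b) := by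
  apply monotoneOn_of_deriv_nonneg (convex_Ioi b)
  · exact fun x hx => (h x hx).continuousAt.continuousWithinAt
  · rw [interior_Ioi]
    exact fun x hx => (h x hx).differentiableAt.differentiableWithinAt
  · rw [interior_Ioi]
    intro x hx
    rw [(h x hx).deriv]
    exact hp x hx

theorem const_aux (b : ℝ) (f : ℝ → ℝ) (h : ∀ x ∈ Set.Ioi b, HasDerivAt f 0 x) :
    ∀ x ∈ Set.Ioi b, ∀ y ∈ Set.Ioi b, f x = f y := by
  have h1 := mono_aux b f (fun _ => 0) h (fun _ _ => le_rfl)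
  have h2 := mono_aux b (fun x => - f x) (fun _ => -0) (fun x hx => (h x hx).fun_neg)
    (fun _ _ => by simp)
  have key : ∀ x ∈ Set.Ioi b, ∀ y ∈ Set.Ioi b, x ≤ y → f x = f y := by
    intro x hx y hy hxy
    have e1 := h1 hx hy hxy
    have e2 : - f x ≤ - f y := h2 hx hy hxy
    linarith
  intro x hx y hy
  rcases le_total x y with hxy | hxy
  · exact key x hx y hy hxy
  · exact (key y hy x hx hxy).symm

/-- Classification of decaying solutions of the homogeneous equation `u'' + u² = 0` on
`(a,∞)`: every nontrivial solution decaying together with its derivative at infinity is of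
the form `u(x) = −6/(x + x₀)²` with `x₀ ≥ −a`. -/
theorem statement4 (a : ℝ) (u u' u'' : ℝ → ℝ)
    (hderiv1 : ∀ x ∈ Set.Ioi a, HasDerivAt u (u' x) x)
    (hderiv2 : ∀ x ∈ Set.Ioi a, HasDerivAt u' (u'' x) x)
    (hcont : ContinuousOn u'' (Set.Ioi a))
    (hode : ∀ x ∈ Set.Ioi a, u'' x + (u x) ^ 2 = 0)
    (hulim : Tendsto u atTop (nhds 0))
    (hu'lim : Tendsto u' atTop (nhds 0))
    (hne : ∃ x ∈ Set.Ioi a, u x ≠ 0) :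
    ∃ x₀ : ℝ, x₀ ≥ -a ∧ ∀ x ∈ Set.Ioi a, u x = -6 / (x + x₀) ^ 2 := by
  have hE : ∀ x ∈ Set.Ioi a, (1/2) * u' x ^ 2 + (1/3) * u x ^ 3 = 0 := by
    have hc := const_aux a (fun x => (1/2) * u' x ^ 2 + (1/3) * u x ^ 3) (by
      intro x hx
      have h1 := (((hderiv2 x hx).fun_pow 2).const_mul (1/2)).fun_add
        (((hderiv1 x hx).fun_pow 3).const_mul (1/3))
      refine HasDerivAt.congr_deriv h1 ?_
      have := hode x hx
      have h2 : u'' x = - u x ^ 2 := by linarith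
      rw [h2]
      push_cast
      ring)
    have hl : Tendsto (fun x => (1/2) * u' x ^ 2 + (1/3) * u x ^ 3) atTop (nhds 0) := by
      have := ((hu'lim.pow 2).const_mul (1/2)).add ((hulim.pow 3).const_mul (1/3))
      simpa using this
    intro x hx
    refine tendsto_nhds_unique (tendsto_const_nhds.congr' ?_) hl
    filter_upwards [eventually_gt_atTop a] with y hy
    exact hc x hx y hy
  have hu0 : ∀ x ∈ Set.Ioi a, u x ≤ 0 := by
    intro x hx
    by_contra! hp
    have := hE x hx
    have := pow_pos hp 3
    nlinarith [sq_nonneg (u' x)]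
  have hu'0 : ∀ x ∈ Set.Ioi a, 0 ≤ u' x := by
    have hm := mono_aux a (fun x => - u' x) (fun x => - u'' x)
      (fun x hx => (hderiv2 x hx).fun_neg)
      (fun x hx => by nlinarith [hode x hx, sq_nonneg (u x)])
    intro x hx
    refine le_of_tendsto hu'lim ?_
    filter_upwards [eventually_ge_atTop x] with y hy
    have : - u' x ≤ - u' y := hm hx (lt_of_lt_of_le hx hy) hy
    linarith
  have hmono := mono_aux a u u' hderiv1 hu'0
  obtain ⟨x1, hx1, hne1⟩ := hne
  have hx1' : a < x1 := hx1
  have hneg1 : u x1 < 0 := lt_of_le_of_ne (hu0 x1 hx1) hne1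
  have hneg : ∀ x ∈ Set.Ioi a, u x < 0 := by
    intro x hx
    rcases le_total x x1 with hxx | hxx
    · exact lt_of_le_of_lt (hmono hx hx1 hxx) hneg1
    · obtain ⟨b, hab, hb1⟩ := exists_between hx1'
      set K := Real.sqrt ((2/3) * (- u b)) with hK
      have hub := hu0 b hab
      have hK2 : K ^ 2 = (2/3) * (- u b) := Real.sq_sqrt (by linarith)
      have hK0 : 0 ≤ K := Real.sqrt_nonneg _
      have hm := mono_aux b (fun y => - (u y * Real.exp (K * y)))
        (fun y => - (u' y * Real.exp (K * y) + u y * (Real.exp (K * y) * (K * 1))))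
        (fun y hy => ((hderiv1 y (lt_trans hab hy)).fun_mul
          (((hasDerivAt_id y).const_mul K).exp)).fun_neg)
        (by
          intro y hy
          have hya : y ∈ Set.Ioi a := lt_trans hab hy
          have hle : u b ≤ u y := hmono hab hya (le_of_lt hy)
          have hu := hu0 y hya
          have hE' := hE y hya
          have hle2 : u' y ≤ K * (- u y) := by
            refine (pow_le_pow_iff_left₀ (hu'0 y hya) (mul_nonneg hK0 (by linarith)) two_ne_zero).1 ?_
            rw [mul_pow, hK2]
            nlinarith [mul_nonneg (sq_nonneg (u y)) (sub_nonneg.2 hle)]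
          have := mul_nonneg (sub_nonneg.2 hle2) (Real.exp_pos (K * y)).le
          linarith)
      have h3 : - (u x1 * Real.exp (K * x1)) ≤ - (u x * Real.exp (K * x)) :=
        hm hb1 (lt_of_lt_of_le hb1 hxx) hxx
      have h4 := mul_neg_of_neg_of_pos hneg1 (Real.exp_pos (K * x1))
      by_contra! hp
      have := mul_nonneg hp (Real.exp_pos (K * x)).le
      linarith
  have hpos : ∀ x ∈ Set.Ioi a, 0 < u' x := by
    intro x hx
    refine lt_of_le_of_ne (hu'0 x hx) ?_
    intro h
    have h1 := hE x hx
    rw [← h] at h1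
    have : u x ^ 3 = 0 := by linarith
    exact (hneg x hx).ne (pow_eq_zero_iff (by norm_num) |>.1 this)
  have hc := const_aux a (fun x => -2 * u x / u' x - x) (by
    intro x hx
    have h1 := (((hderiv1 x hx).const_mul (-2)).fun_div (hderiv2 x hx) (hpos x hx).ne').fun_sub
      (hasDerivAt_id x)
    refine HasDerivAt.congr_deriv h1 ?_
    have hp := (hpos x hx).ne'
    have h2 : u'' x = - u x ^ 2 := by linarith [hode x hx]
    rw [h2]
    field_simp
    linarith [hE x hx])
  set x₀ := -2 * u x1 / u' x1 - x1 with hx₀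
  have hval : ∀ x ∈ Set.Ioi a, x + x₀ = -2 * u x / u' x := by
    intro x hx
    have : -2 * u x / u' x - x = x₀ := hc x hx x1 hx1
    linarith
  refine ⟨x₀, ?_, ?_⟩
  · by_contra! hlt
    have hm : -x₀ ∈ Set.Ioi a := by
      show a < -x₀
      linarith
    have h1 := hval _ hm
    have : 0 < -2 * u (-x₀) / u' (-x₀) := div_pos (by linarith [hneg _ hm]) (hpos _ hm)
    linarith
  · intro x hx
    have hp := (hpos x hx).ne'
    have hn := (hneg x hx).ne
    rw [hval x hx, div_pow, eq_div_iff (by positivity)]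
    field_simp
    linarith [hE x hx]
end

section
/- Let Φₛ(y) = (1/8)·(15·sech²(y) − 2·cosh²(y) − 5 − 15·y·tanh(y)·sech²(y)), where sech t = 1/cosh t. Then the function v(y) = Φₛ(y/√2) satisfies v''(y) + 2·(3·sech²(y/√2) − 1)·v(y) = 0 for all y ∈ ℝ; moreover Φₛ(0) = 1 and Φₛ'(0) = 0. -/
/-- The hyperbolic secant. -/
noncomputable def sech (t : ℝ) : ℝ := 1 / Real.cosh t

/-- The symmetric complementary function of the linearisation about the homoclinic. -/
noncomputable def Phi_s (y : ℝ) : ℝ :=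
  (1/8) * (15 * (sech y) ^ 2 - 2 * (Real.cosh y) ^ 2 - 5
    - 15 * y * Real.tanh y * (sech y) ^ 2)

theorem Phi_s_eq (z : ℝ) : Phi_s z = (1/8) * (15 / Real.cosh z ^ 2 - 2 * Real.cosh z ^ 2 - 5
    - 15 * (z * (Real.sinh z / Real.cosh z ^ 3))) := by
  have hc : Real.cosh z ≠ 0 := (Real.cosh_pos z).ne'
  unfold Phi_s sech
  rw [Real.tanh_eq_sinh_div_cosh]
  field_simp

noncomputable def dPhi (z : ℝ) : ℝ :=
  (1/8) * (-45 * (Real.sinh z / Real.cosh z ^ 3) - 4 * (Real.cosh z * Real.sinh z)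
    - 15 * (z * (1 / Real.cosh z ^ 2 - 3 * (Real.sinh z ^ 2 / Real.cosh z ^ 4))))

theorem hasDerivAt_Phi (z : ℝ) : HasDerivAt Phi_s (dPhi z) z := by
  have hc : Real.cosh z ≠ 0 := (Real.cosh_pos z).ne'
  have hC := Real.hasDerivAt_cosh z
  have hS := Real.hasDerivAt_sinh z
  rw [show Phi_s = _ from funext Phi_s_eq]
  have h := ((((((hasDerivAt_const z (15:ℝ)).fun_div (hC.fun_pow 2) (pow_ne_zero 2 hc)).fun_sub
    ((hC.fun_pow 2).const_mul 2)).sub_const 5).fun_sub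
    (((hasDerivAt_id' z).fun_mul (hS.fun_div (hC.fun_pow 3) (pow_ne_zero 3 hc))).const_mul 15))).const_mul (1/8)
  refine h.congr_deriv ?_
  unfold dPhi
  field_simp
  ring

theorem hasDerivAt_dPhi (z : ℝ) :
    HasDerivAt dPhi (-4 * (3 * sech z ^ 2 - 1) * Phi_s z) z := by
  have hc : Real.cosh z ≠ 0 := (Real.cosh_pos z).ne'
  have hC := Real.hasDerivAt_cosh z
  have hS := Real.hasDerivAt_sinh z
  have h := ((((hS.fun_div (hC.fun_pow 3) (pow_ne_zero 3 hc)).const_mul (-45)).fun_sub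
    ((hC.fun_mul hS).const_mul 4)).fun_sub
    (((hasDerivAt_id' z).fun_mul
      (((hasDerivAt_const z (1:ℝ)).fun_div (hC.fun_pow 2) (pow_ne_zero 2 hc)).fun_sub
        (((hS.fun_pow 2).fun_div (hC.fun_pow 4) (pow_ne_zero 4 hc)).const_mul 3))).const_mul 15)).const_mul (1/8)
  refine h.congr_deriv ?_
  rw [Phi_s_eq, sech]
  have h2 : Real.sinh z ^ 2 = Real.cosh z ^ 2 - 1 := Real.sinh_sq z
  have h3 : Real.sinh z ^ 3 = Real.sinh z * (Real.cosh z ^ 2 - 1) := by rw [← h2]; ring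
  field_simp
  ring_nf
  simp only [h2, h3]
  ring

/-- `v(y) = Φₛ(y/√2)` solves the linearised equation `v'' + 2(3 sech²(y/√2) − 1)v = 0`,
with `Φₛ(0) = 1` and `Φₛ'(0) = 0`. -/
theorem statement8 :
    (∀ y : ℝ,
      deriv (deriv (fun y : ℝ => Phi_s (y / Real.sqrt 2))) y
        + 2 * (3 * (sech (y / Real.sqrt 2)) ^ 2 - 1) * Phi_s (y / Real.sqrt 2) = 0) ∧
    Phi_s 0 = 1 ∧ deriv Phi_s 0 = 0 := by
  refine ⟨fun y => ?_, ?_, ?_⟩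
  · have hd (x : ℝ) : HasDerivAt (fun y : ℝ => y / Real.sqrt 2) (1 / Real.sqrt 2) x :=
      (hasDerivAt_id' x).div_const _
    have h1 : deriv (fun y : ℝ => Phi_s (y / Real.sqrt 2))
        = fun y => dPhi (y / Real.sqrt 2) * (1 / Real.sqrt 2) :=
      by
      funext x
      have h := (hasDerivAt_Phi (x / Real.sqrt 2)).comp x (hd x)
      exact h.deriv
    have h2 := (((hasDerivAt_dPhi (y / Real.sqrt 2)).comp y (hd y)).mul_const
      (1 / Real.sqrt 2)).deriv
    have h3 : (1 / Real.sqrt 2) * (1 / Real.sqrt 2) = 1 / 2 := by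
      rw [div_mul_div_comm, Real.mul_self_sqrt (by norm_num)]; norm_num
    rw [h1]
    refine (congrArg (· + _) h2).trans ?_
    simp only [mul_assoc, h3]
    ring
  · norm_num [Phi_s_eq]
  · rw [(hasDerivAt_Phi 0).deriv]
    simp [dPhi]
end

section
/- With sech t = 1/cosh t and Φₛ(s) = (1/8)·(15·sech²(s) − 2·cosh²(s) − 5 − 15·s·tanh(s)·sech²(s)), the improper integral identity 4·∫₀^∞ s²·(Φₛ(s) + (1/16)·e^{2s} + 3/4) ds = −(1/16)·(5π² + 1) holds (in particular the integrand is integrable on [0,∞)). -/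
open MeasureTheory

lemma aux_int (k : ℕ) (b : ℝ) (hb : 0 < b) :
    IntegrableOn (fun s : ℝ => s ^ k * Real.exp (-(b * s))) (Set.Ioi 0) := by
  have h := integrableOn_rpow_mul_exp_neg_mul_rpow (s := (k:ℝ)) (p := 1) (b := b)
    (by have : (0:ℝ) ≤ k := Nat.cast_nonneg k
        linarith) one_pos hb
  refine h.congr_fun (fun s _ => ?_) measurableSet_Ioi
  simp

lemma aux_val (b : ℝ) (hb : 0 < b) :
    ∫ s in Set.Ioi (0:ℝ), s * Real.exp (-(b * s)) = 1 / b ^ 2 := by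
  have h := Real.integral_rpow_mul_exp_neg_mul_Ioi (a := 2) (r := b) (by norm_num) hb
  have h2 : Real.Gamma 2 = 1 := by simp
  rw [h2] at h
  norm_num at h
  simpa using h

lemma aux_bose (a : ℝ) (ha : 0 < a) :
    IntegrableOn (fun s : ℝ => s / (Real.exp (a * s) - 1)) (Set.Ioi 0) ∧
    ∫ s in Set.Ioi (0:ℝ), s / (Real.exp (a * s) - 1) = Real.pi ^ 2 / (6 * a ^ 2) := by
  set F : ℕ → ℝ → ℝ := fun n s => s * Real.exp (-((a * (n+1)) * s)) with hF
  have hpos : ∀ n : ℕ, 0 < a * ((n:ℝ) + 1) := fun n => by positivity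
  have hint : ∀ n, Integrable (F n) (volume.restrict (Set.Ioi 0)) := fun n => by
    simpa [IntegrableOn] using aux_int 1 _ (hpos n)
  have hval : ∀ n, ∫ s in Set.Ioi (0:ℝ), F n s = 1 / a ^ 2 * (1 / ((n:ℝ) + 1) ^ 2) := fun n => by
    rw [hF]
    simp only []
    rw [aux_val _ (hpos n)]
    field_simp
  have hnorm : ∀ n, ∫ s in Set.Ioi (0:ℝ), ‖F n s‖ = 1 / a ^ 2 * (1 / ((n:ℝ) + 1) ^ 2) := fun n => by
    rw [← hval n]
    refine setIntegral_congr_fun measurableSet_Ioi (fun s hs => ?_)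
    have hs : 0 < s := hs
    simp only [hF]
    rw [Real.norm_of_nonneg (by positivity)]
  have hz : HasSum (fun n : ℕ => 1 / ((n:ℝ) + 1) ^ 2) (Real.pi ^ 2 / 6) := by
    have := (hasSum_nat_add_iff' 1).mpr hasSum_zeta_two
    simpa using this
  have hz' := hz.mul_left (1 / a ^ 2)
  have hsum : ∀ s ∈ Set.Ioi (0:ℝ), HasSum (fun n => F n s) (s / (Real.exp (a * s) - 1)) := by
    intro s hs
    have hs : 0 < s := hs
    have h1 : Real.exp (-(a * s)) < 1 := by
      rw [Real.exp_lt_one_iff]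
      have := mul_pos ha hs
      linarith
    have hg := (hasSum_geometric_of_lt_one (Real.exp_pos _).le h1).mul_left
      (s * Real.exp (-(a * s)))
    have hfun : (fun n => F n s) =
        fun n : ℕ => s * Real.exp (-(a * s)) * Real.exp (-(a * s)) ^ n := by
      funext n
      simp only [hF]
      rw [← Real.exp_nat_mul, mul_assoc s, ← Real.exp_add]
      congr 2
      ring
    have hlim : s / (Real.exp (a * s) - 1)
        = s * Real.exp (-(a * s)) * (1 - Real.exp (-(a * s)))⁻¹ := by
      have h3 : 1 < Real.exp (a * s) := Real.one_lt_exp_iff.mpr (mul_pos ha hs)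
      have h5 : 1 - Real.exp (-(a * s)) ≠ 0 := by linarith
      rw [Real.exp_neg] at h5 ⊢
      generalize Real.exp (a * s) = x at *
      have h4 : x - 1 ≠ 0 := by linarith
      have h6 : x ≠ 0 := by linarith
      have h7 : 1 - x⁻¹ = (x - 1) / x := by field_simp
      rw [h7]
      field_simp
    rw [hfun, hlim]
    exact hg
  have hsn : Summable (fun n => ∫ s in Set.Ioi (0:ℝ), ‖F n s‖) := by
    simp_rw [hnorm]
    exact hz'.summable
  have hS := hasSum_integral_of_summable_integral_norm hint hsn
  simp_rw [hval] at hS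
  have hS2 := hS.unique hz'
  have hcongr : ∫ s in Set.Ioi (0:ℝ), s / (Real.exp (a * s) - 1)
      = ∫ s in Set.Ioi (0:ℝ), ∑' n, F n s :=
    setIntegral_congr_fun measurableSet_Ioi (fun s hs => (hsum s hs).tsum_eq.symm)
  have hv : ∫ s in Set.Ioi (0:ℝ), s / (Real.exp (a * s) - 1) = Real.pi ^ 2 / (6 * a ^ 2) := by
    rw [hcongr, hS2]
    field_simp
  refine ⟨?_, hv⟩
  by_contra hni
  have h0 := integral_undef hni
  rw [h0] at hv
  have : 0 < Real.pi ^ 2 / (6 * a ^ 2) := by positivity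
  linarith

lemma aux_fermi :
    IntegrableOn (fun s : ℝ => s / (Real.exp (2 * s) + 1)) (Set.Ioi 0) ∧
    ∫ s in Set.Ioi (0:ℝ), s / (Real.exp (2 * s) + 1) = Real.pi ^ 2 / 48 := by
  obtain ⟨i1, v1⟩ := aux_bose 2 (by norm_num)
  obtain ⟨i2, v2⟩ := aux_bose 4 (by norm_num)
  have he : ∀ s ∈ Set.Ioi (0:ℝ), s / (Real.exp (2 * s) - 1) - 2 * (s / (Real.exp (4 * s) - 1))
      = s / (Real.exp (2 * s) + 1) := by
    intro s hs
    have hs : 0 < s := hs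
    have h4 : Real.exp (4 * s) = Real.exp (2 * s) ^ 2 := by
      rw [← Real.exp_nat_mul]; congr 1; push_cast; ring
    have h1 : 1 < Real.exp (2 * s) := Real.one_lt_exp_iff.mpr (by linarith)
    rw [h4]
    generalize Real.exp (2 * s) = x at *
    have e1 : x - 1 ≠ 0 := by linarith
    have e2 : x + 1 ≠ 0 := by linarith
    have e3 : x ^ 2 - 1 = (x - 1) * (x + 1) := by ring
    rw [e3]
    field_simp
    ring
  refine ⟨(i1.sub (i2.const_mul 2)).congr_fun he measurableSet_Ioi, ?_⟩
  rw [← setIntegral_congr_fun measurableSet_Ioi he, integral_sub i1 (i2.const_mul 2),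
    integral_const_mul, v1, v2]
  ring

/-- simplified integrand -/
lemma aux_simp (s : ℝ) : s ^ 2 * (Phi_s s + (1/16) * Real.exp (2 * s) + 3/4) =
    15/8 * s ^ 2 * (1 / Real.cosh s ^ 2) - 15/8 * s ^ 3 * (Real.tanh s * (1 / Real.cosh s ^ 2))
      - 1/16 * (s ^ 2 * Real.exp (-(2 * s))) := by
  have h : Real.cosh s ^ 2 = (Real.exp (2 * s) + 2 + Real.exp (-(2 * s))) / 4 := by
    rw [Real.cosh_eq]
    have h1 : Real.exp (2 * s) = Real.exp s ^ 2 := by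
      rw [← Real.exp_nat_mul]; norm_cast
    rw [Real.exp_neg, Real.exp_neg, h1]
    have := Real.exp_ne_zero s
    field_simp
    ring
  unfold Phi_s sech
  rw [div_pow, one_pow]
  generalize 1 / Real.cosh s ^ 2 = q
  rw [h]
  ring

lemma aux_sech (s : ℝ) : 1 / Real.cosh s ^ 2 ≤ 4 * Real.exp (-(2 * s)) := by
  have h1 : Real.exp (-(2 * s)) = (Real.exp s ^ 2)⁻¹ := by
    rw [Real.exp_neg, ← Real.exp_nat_mul]; norm_cast
  have h2 : Real.exp s / 2 ≤ Real.cosh s := by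
    rw [Real.cosh_eq]; have := Real.exp_pos (-s); linarith
  rw [h1]
  have h3 := Real.exp_pos s
  calc 1 / Real.cosh s ^ 2 ≤ 1 / (Real.exp s / 2) ^ 2 := by gcongr
    _ = _ := by field_simp; norm_num

lemma aux_tanh (s : ℝ) : Real.tanh s - 1 = - (2 / (Real.exp (2 * s) + 1)) := by
  have h1 : Real.exp (2 * s) = Real.exp s ^ 2 := by
    rw [← Real.exp_nat_mul]; norm_cast
  have := Real.exp_pos s
  rw [Real.tanh_eq, h1, Real.exp_neg]
  field_simp
  ring

lemma aux_tanh_abs (s : ℝ) : |Real.tanh s| ≤ 1 := by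
  have h := aux_tanh s
  have h2 : 2 / (Real.exp (2 * s) + 1) ≤ 2 := by
    have := Real.exp_pos (2 * s)
    rw [div_le_iff₀ (by linarith)]; linarith
  have h3 : 0 < 2 / (Real.exp (2 * s) + 1) := by positivity
  rw [abs_le]; constructor <;> linarith

lemma aux_integrable :
    IntegrableOn (fun s : ℝ => s ^ 2 * (Phi_s s + (1/16) * Real.exp (2 * s) + 3/4))
      (Set.Ioi 0) := by
  simp_rw [aux_simp]
  have hc : ∀ s : ℝ, Real.cosh s ^ 2 ≠ 0 := fun s => (pow_pos (Real.cosh_pos s) 2).ne'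
  have hc' : ∀ s : ℝ, Real.cosh s ≠ 0 := fun s => (Real.cosh_pos s).ne'
  have hq : Continuous (fun s : ℝ => 1 / Real.cosh s ^ 2) :=
    continuous_const.div (Real.continuous_cosh.pow 2) hc
  have ht : Continuous (fun s : ℝ => Real.tanh s) := by
    simp_rw [Real.tanh_eq_sinh_div_cosh]
    exact Real.continuous_sinh.div Real.continuous_cosh hc'
  have i2 : IntegrableOn (fun s : ℝ => s ^ 2 * (1 / Real.cosh s ^ 2)) (Set.Ioi 0) := by
    refine Integrable.mono' ((aux_int 2 2 (by norm_num)).const_mul 4)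
      (((continuous_pow 2).mul hq).aestronglyMeasurable) (Filter.Eventually.of_forall fun s => ?_)
    rw [Real.norm_of_nonneg (by positivity)]
    have := mul_le_mul_of_nonneg_left (aux_sech s) (sq_nonneg s)
    linarith
  have i3 : IntegrableOn (fun s : ℝ => s ^ 3 * (Real.tanh s * (1 / Real.cosh s ^ 2)))
      (Set.Ioi 0) := by
    refine Integrable.mono' ((aux_int 3 2 (by norm_num)).const_mul 4)
      (((continuous_pow 3).mul (ht.mul hq)).aestronglyMeasurable) ?_
    filter_upwards [ae_restrict_mem measurableSet_Ioi] with s hs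
    have hs : 0 < s := hs
    have hq0 : 0 ≤ 1 / Real.cosh s ^ 2 := by positivity
    rw [Real.norm_eq_abs, abs_mul, abs_mul, abs_of_nonneg hq0, abs_of_pos (pow_pos hs 3)]
    have h1 : |Real.tanh s| * (1 / Real.cosh s ^ 2) ≤ 4 * Real.exp (-(2 * s)) :=
      (mul_le_of_le_one_left hq0 (aux_tanh_abs s)).trans (aux_sech s)
    have := mul_le_mul_of_nonneg_left h1 (pow_pos hs 3).le
    linarith
  have := ((i2.const_mul (15/8)).sub (i3.const_mul (15/8))).sub
    ((aux_int 2 2 (by norm_num)).const_mul (1/16))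
  refine IntegrableOn.congr_fun this (fun s _ => ?_) measurableSet_Ioi
  simp only [Pi.sub_apply]
  ring

noncomputable def auxF (s : ℝ) : ℝ :=
  15/16 * s ^ 3 * (1 / Real.cosh s ^ 2) - 15/16 * (s ^ 2 * (Real.tanh s - 1))
    + (s ^ 2 / 32 + s / 32 + 1 / 64) * Real.exp (-(2 * s))

lemma auxF_deriv (s : ℝ) : HasDerivAt auxF
    (s ^ 2 * (Phi_s s + (1/16) * Real.exp (2 * s) + 3/4) + 15/4 * (s / (Real.exp (2 * s) + 1))) s := by
  have hc := (Real.cosh_pos s).ne'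
  have hq : HasDerivAt (fun s : ℝ => 1 / Real.cosh s ^ 2)
      (-2 * (Real.tanh s * (1 / Real.cosh s ^ 2))) s := by
    have := (hasDerivAt_const s (1:ℝ)).div ((Real.hasDerivAt_cosh s).pow 2)
      (pow_ne_zero 2 hc)
    refine this.congr_deriv ?_
    rw [Real.tanh_eq_sinh_div_cosh]
    simp only [Pi.pow_apply]
    field_simp
    ring
  have ht : HasDerivAt (fun s : ℝ => Real.tanh s - 1) (1 / Real.cosh s ^ 2) s := by
    have h := ((Real.hasDerivAt_sinh s).div (Real.hasDerivAt_cosh s) hc).sub_const 1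
    have h2 : (fun s : ℝ => Real.tanh s - 1) = fun s => (Real.sinh / Real.cosh) s - 1 := by
      funext s; simp [Real.tanh_eq_sinh_div_cosh]
    rw [h2]
    refine h.congr_deriv ?_
    congr 1
    have := Real.cosh_sq s
    nlinarith
  have he : HasDerivAt (fun s : ℝ => Real.exp (-(2 * s))) (Real.exp (-(2 * s)) * (-(2 * 1))) s :=
    (((hasDerivAt_id s).const_mul 2).neg).exp
  have h3 : HasDerivAt (fun s : ℝ => 15/16 * s ^ 3) (15/16 * (3 * s ^ 2)) s := by
    simpa using (hasDerivAt_pow 3 s).const_mul (15/16)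
  have h2 : HasDerivAt (fun s : ℝ => s ^ 2) (2 * s) s := by
    simpa using (hasDerivAt_pow 2 s)
  have hp : HasDerivAt (fun s : ℝ => s ^ 2 / 32 + s / 32 + 1 / 64) (2 * s / 32 + 1 / 32) s :=
    ((h2.div_const 32).add ((hasDerivAt_id s).div_const 32)).add_const _
  have := ((h3.mul hq).sub ((h2.mul ht).const_mul (15/16))).add (hp.mul he)
  refine (this.congr_deriv ?_ : HasDerivAt auxF _ s)
  rw [aux_simp, aux_tanh]
  ring

lemma auxF_tendsto : Filter.Tendsto auxF Filter.atTop (nhds 0) := by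
  have hk : ∀ k : ℕ, Filter.Tendsto (fun s : ℝ => s ^ k * Real.exp (-s)) Filter.atTop (nhds 0) :=
    fun k => Real.tendsto_pow_mul_exp_neg_atTop_nhds_zero k
  have hb : Filter.Tendsto (fun s : ℝ => 4 * (s ^ 3 * Real.exp (-s)) + 4 * (s ^ 2 * Real.exp (-s))
      + s ^ 1 * Real.exp (-s) + s ^ 0 * Real.exp (-s)) Filter.atTop (nhds 0) := by
    simpa using ((((hk 3).const_mul 4).add ((hk 2).const_mul 4)).add (hk 1)).add (hk 0)
  refine squeeze_zero' ?_ ?_ hb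
  · filter_upwards [Filter.eventually_ge_atTop 0] with s hs
    unfold auxF
    rw [aux_tanh]
    have h1 : 0 ≤ s ^ 2 * (2 / (Real.exp (2 * s) + 1)) := by positivity
    have h2 : 0 ≤ 15/16 * s ^ 3 * (1 / Real.cosh s ^ 2) := by positivity
    have h3 : 0 ≤ (s ^ 2 / 32 + s / 32 + 1 / 64) * Real.exp (-(2 * s)) := by positivity
    linarith
  · filter_upwards [Filter.eventually_ge_atTop 0] with s hs
    unfold auxF
    rw [aux_tanh]
    have e1 : Real.exp (-(2 * s)) ≤ Real.exp (-s) := Real.exp_le_exp.mpr (by linarith)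
    have e2 : 1 / Real.cosh s ^ 2 ≤ 4 * Real.exp (-s) := (aux_sech s).trans (by linarith)
    have e3 : 2 / (Real.exp (2 * s) + 1) ≤ 2 * Real.exp (-s) := by
      refine le_trans ?_ (mul_le_mul_of_nonneg_left e1 zero_le_two)
      rw [Real.exp_neg, ← div_eq_mul_inv]
      have := Real.exp_pos (2 * s)
      gcongr
      linarith
    have m1 := mul_le_mul_of_nonneg_left e2 (pow_nonneg hs 3)
    have m2 := mul_le_mul_of_nonneg_left e3 (pow_nonneg hs 2)
    have m3 := mul_le_mul_of_nonneg_left e1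
      (show 0 ≤ s ^ 2 / 32 + s / 32 + 1 / 64 by positivity)
    have p := Real.exp_pos (-s)
    have p3 : 0 ≤ s ^ 3 * Real.exp (-s) := by positivity
    have p2 : 0 ≤ s ^ 2 * Real.exp (-s) := by positivity
    have p1 : 0 ≤ s * Real.exp (-s) := by positivity
    nlinarith

/-- The integral identity `4∫₀^∞ s²(Φₛ(s) + e^{2s}/16 + 3/4) ds = −(5π² + 1)/16`,
the integrand being integrable on `[0,∞)`. -/
theorem statement10 :
    IntegrableOn (fun s : ℝ => s ^ 2 * (Phi_s s + (1/16) * Real.exp (2 * s) + 3/4))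
      (Set.Ioi 0) ∧
    4 * ∫ s in Set.Ioi (0:ℝ), s ^ 2 * (Phi_s s + (1/16) * Real.exp (2 * s) + 3/4)
      = -(1/16) * (5 * Real.pi ^ 2 + 1) := by
  refine ⟨aux_integrable, ?_⟩
  obtain ⟨i, v⟩ := aux_fermi
  have h := integral_Ioi_of_hasDerivAt_of_tendsto' (a := 0) (fun s _ => auxF_deriv s)
    (aux_integrable.add (i.const_mul (15/4))) auxF_tendsto
  rw [integral_add aux_integrable (i.const_mul (15/4)), integral_const_mul, v] at h
  have h0 : auxF 0 = 1 / 64 := by simp [auxF]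
  rw [h0] at h
  linarith
end

section
/- Let M > 0 and set X₀ = 2·(3/M)^{1/3}. Define V(X) = −6/(X₀ + |X|)² for X ∈ ℝ. Then V''(X) + V(X)² = 0 for all X ≠ 0, V(X) → 0 as X → ±∞, and the one-sided derivatives of V at 0 exist and satisfy lim_{X→0⁺} V'(X) − lim_{X→0⁻} V'(X) = M. -/
open Filter

lemma aux_d1 (A s x : ℝ) (h : A + s * x ≠ 0) :
    HasDerivAt (fun x : ℝ => -6 / (A + s * x) ^ 2) (12 * s / (A + s * x) ^ 3) x := by
  have h1 : HasDerivAt (fun x : ℝ => A + s * x) s x := by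
    simpa using ((hasDerivAt_id x).const_mul s).const_add A
  have h2 := (hasDerivAt_const x (-6 : ℝ)).fun_div (h1.fun_pow 2) (pow_ne_zero 2 h)
  refine h2.congr_deriv ?_
  field_simp
  norm_num
  try ring

lemma aux_d2 (A s x : ℝ) (h : A + s * x ≠ 0) :
    HasDerivAt (fun x : ℝ => 12 * s / (A + s * x) ^ 3) (-36 * s ^ 2 / (A + s * x) ^ 4) x := by
  have h1 : HasDerivAt (fun x : ℝ => A + s * x) s x := by
    simpa using ((hasDerivAt_id x).const_mul s).const_add A
  have h2 := (hasDerivAt_const x (12 * s : ℝ)).fun_div (h1.fun_pow 3) (pow_ne_zero 3 h)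
  refine h2.congr_deriv ?_
  field_simp
  norm_num
  try ring

lemma aux_ode (A s x : ℝ) (hA : 0 < A) (hs : s ^ 2 = 1) (U : Set ℝ) (hU : IsOpen U) (hx : x ∈ U)
    (hab : ∀ y ∈ U, |y| = s * y) :
    deriv (deriv (fun X : ℝ => -6 / (A + |X|) ^ 2)) x + (-6 / (A + |x|) ^ 2) ^ 2 = 0 := by
  have hne : ∀ y ∈ U, A + s * y ≠ 0 := fun y hy => by
    rw [← hab y hy]; positivity
  have e1 : ∀ y ∈ U, deriv (fun X : ℝ => -6 / (A + |X|) ^ 2) y = 12 * s / (A + s * y) ^ 3 := by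
    intro y hy
    refine ((aux_d1 A s y (hne y hy)).congr_of_eventuallyEq ?_).deriv
    filter_upwards [hU.mem_nhds hy] with z hz
    rw [hab z hz]
  have e2 : deriv (deriv (fun X : ℝ => -6 / (A + |X|) ^ 2)) x = -36 * s ^ 2 / (A + s * x) ^ 4 := by
    refine ((aux_d2 A s x (hne x hx)).congr_of_eventuallyEq ?_).deriv
    filter_upwards [hU.mem_nhds hx] with z hz
    exact e1 z hz
  have := hne x hx
  rw [e2, hab x hx, hs]
  field_simp
  norm_num

/-- The outer limit profile at the termination point `α = 0` of branch `B₀`: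
`V(X) = −6/(X₀ + |X|)²` with `X₀ = 2(3/M)^{1/3}` solves `V'' + V² = 0` away from `X = 0`,
decays at infinity, and its slope jumps by exactly the mass `M` across `X = 0`. -/
theorem statement15 (M : ℝ) (hM : 0 < M) :
    let X₀ : ℝ := 2 * (3 / M) ^ ((1:ℝ)/3)
    let V : ℝ → ℝ := fun X => -6 / (X₀ + |X|) ^ 2
    (∀ X : ℝ, X ≠ 0 → deriv (deriv V) X + (V X) ^ 2 = 0) ∧
    Tendsto V atTop (nhds 0) ∧ Tendsto V atBot (nhds 0) ∧
    ∃ dplus dminus : ℝ,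
      HasDerivWithinAt V dplus (Set.Ici 0) 0 ∧
      HasDerivWithinAt V dminus (Set.Iic 0) 0 ∧
      dplus - dminus = M := by
  intro X₀ V
  have hX : 0 < X₀ := by positivity
  have hX3 : X₀ ^ 3 = 24 / M := by
    have : ((3 / M) ^ ((1:ℝ)/3)) ^ 3 = 3 / M := by
      rw [← Real.rpow_natCast, ← Real.rpow_mul (by positivity)]
      norm_num
    simp only [X₀]
    rw [mul_pow, this]
    ring
  have hlim : Tendsto (fun y : ℝ => -6 / (X₀ + y) ^ 2) atTop (nhds 0) :=
    Tendsto.const_div_atTop ((tendsto_pow_atTop two_ne_zero).comp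
      (tendsto_atTop_add_const_left _ X₀ tendsto_id)) _
  refine ⟨?_, hlim.comp tendsto_abs_atTop_atTop, hlim.comp tendsto_abs_atBot_atTop,
    12 * 1 / (X₀ + 1 * 0) ^ 3, 12 * (-1) / (X₀ + (-1) * 0) ^ 3, ?_, ?_, ?_⟩
  · intro x hx
    rcases lt_or_gt_of_ne hx with h | h
    · exact aux_ode X₀ (-1) x hX (by norm_num) (Set.Iio 0) isOpen_Iio h
        (fun y hy => by rw [abs_of_neg hy]; ring)
    · exact aux_ode X₀ 1 x hX (by norm_num) (Set.Ioi 0) isOpen_Ioi h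
        (fun y hy => by rw [abs_of_pos hy]; ring)
  · refine (aux_d1 X₀ 1 0 (by simpa using hX.ne')).hasDerivWithinAt.congr ?_ (by simp [V])
    intro y hy
    simp only [V]
    rw [abs_of_nonneg hy, one_mul]
  · refine (aux_d1 X₀ (-1) 0 (by simpa using hX.ne')).hasDerivWithinAt.congr ?_ (by simp [V])
    intro y hy
    simp only [V]
    rw [abs_of_nonpos hy, neg_one_mul]
  · simp only [mul_zero, add_zero]
    rw [hX3]
    field_simp
    norm_num
end

section
/- For every α > 0 and L > 0 there exists a function u : ℝ → ℝ such that: u is continuously differentiable on ℝ and twice continuously differentiable on ℝ \ {−L, L}; u is even; u''(x) + u(x)² = α for all x with |x| < L; u''(x) + u(x)² = 0 for all x with |x| > L; u(x) < 0 for all x ∈ ℝ; and u(x) → 0 as x → ±∞. -/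
open Filter

lemma inv_lem (p : ℝ → ℝ) (hc : Continuous p) (hp : ∀ x, 0 < p x) (M : ℝ) (hM : ∀ x, p x ≤ M)
    (he : ∀ x, p (-x) = p x) :
    ∃ s : ℝ → ℝ, (∀ x, s (-x) = - s x) ∧ (∀ x, HasDerivAt s (p (s x)) x) ∧
      (∀ y, s (∫ t in (0:ℝ)..y, (p t)⁻¹) = y) := by
  have hM0 : 0 < M := lt_of_lt_of_le (hp 0) (hM 0)
  have hci : Continuous (fun t => (p t)⁻¹) := hc.inv₀ (fun x => (hp x).ne')
  set h : ℝ → ℝ := fun y => ∫ t in (0:ℝ)..y, (p t)⁻¹ with hh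
  have hd : ∀ y, HasDerivAt h (p y)⁻¹ y := fun y =>
    hci.integral_hasStrictDerivAt 0 y |>.hasDerivAt
  have hmono : StrictMono h := strictMono_of_hasDerivAt_pos hd (fun y => inv_pos.2 (hp y))
  have hcont : Continuous h := continuous_iff_continuousAt.2 fun y => (hd y).continuousAt
  have h0 : h 0 = 0 := by simp [hh]
  have hodd : ∀ y, h (-y) = - h y := by
    intro y
    have := intervalIntegral.integral_comp_neg (a := 0) (b := y) (fun t => (p t)⁻¹)
    simp only [he, neg_zero] at this
    simp only [hh]
    rw [this, intervalIntegral.integral_symm]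
  have hk : Monotone (fun y => h y - M⁻¹ * y) := by
    apply monotone_of_hasDerivAt_nonneg (f' := fun y => (p y)⁻¹ - M⁻¹)
    · intro y
      exact ((hd y).sub ((hasDerivAt_id y).const_mul M⁻¹)).congr_deriv (by simp)
    · intro y
      exact sub_nonneg.2 (inv_anti₀ (hp y) (hM y))
  have htop : Tendsto h atTop atTop := by
    refine tendsto_atTop_mono' _ ?_ (tendsto_id.const_mul_atTop (inv_pos.2 hM0))
    filter_upwards [eventually_ge_atTop 0] with y hy
    have := hk hy
    simp only [h0] at this
    simp only [id]
    linarith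
  have hbot : Tendsto h atBot atBot := by
    refine tendsto_atBot_mono' _ ?_ (tendsto_id.const_mul_atBot (inv_pos.2 hM0))
    filter_upwards [eventually_le_atBot 0] with y hy
    have := hk hy
    simp only [h0] at this
    simp only [id]
    linarith
  have hsurj : Function.Surjective h := hcont.surjective htop hbot
  let e := StrictMono.orderIsoOfSurjective h hmono hsurj
  have he1 : ∀ y, e y = h y := fun y => rfl
  have hes : ∀ y, e.symm (h y) = y := fun y => by rw [← he1]; simp
  have hse : ∀ x, h (e.symm x) = x := fun x => by rw [← he1]; simp
  refine ⟨e.symm, ?_, ?_, hes⟩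
  · intro x
    apply hmono.injective
    rw [hodd, hse, hse]
  · intro x
    have := HasDerivAt.of_local_left_inverse (f := h) (g := e.symm) (a := x)
      e.symm.continuous.continuousAt (hd (e.symm x)) (inv_pos.2 (hp _)).ne'
      (Eventually.of_forall hse)
    simpa using this

lemma glue_d (f g f' g' : ℝ → ℝ) (a : ℝ) (hf : ∀ x ≤ a, HasDerivAt f (f' x) x)
    (hg : ∀ x, a ≤ x → HasDerivAt g (g' x) x) (h0 : f a = g a) (h1 : f' a = g' a) (x : ℝ) :
    HasDerivAt (fun x => if x ≤ a then f x else g x) (if x ≤ a then f' x else g' x) x := by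
  rcases lt_trichotomy x a with h | h | h
  · rw [if_pos h.le]
    refine (hf x h.le).congr_of_eventuallyEq ?_
    filter_upwards [Iio_mem_nhds h] with y hy
    rw [if_pos (le_of_lt hy)]
  · subst h
    rw [if_pos le_rfl]
    have A : HasDerivWithinAt (fun y => if y ≤ x then f y else g y) (f' x) (Set.Iic x) x := by
      refine (hf x le_rfl).hasDerivWithinAt.congr (fun y hy => ?_) ?_
      · exact if_pos hy
      · simp
    have B : HasDerivWithinAt (fun y => if y ≤ x then f y else g y) (f' x) (Set.Ici x) x := by
      rw [h1]
      refine (hg x le_rfl).hasDerivWithinAt.congr (fun y hy => ?_) ?_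
      · rcases eq_or_lt_of_le (show x ≤ y from hy) with h | h
        · subst h; simp [h0]
        · exact if_neg (not_le.2 h)
      · simp [h0]
    have := A.union B
    rw [Set.Iic_union_Ici] at this
    exact hasDerivWithinAt_univ.1 this
  · rw [if_neg (not_le.2 h)]
    refine (hg x h.le).congr_of_eventuallyEq ?_
    filter_upwards [Ioi_mem_nhds h] with y hy
    rw [if_neg (not_le.2 hy)]

lemma glue_c (f g : ℝ → ℝ) (a : ℝ) (hf : ∀ x ≤ a, ContinuousAt f x)
    (hg : ∀ x, a ≤ x → ContinuousAt g x) (h0 : f a = g a) (x : ℝ) :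
    ContinuousAt (fun x => if x ≤ a then f x else g x) x := by
  rcases lt_trichotomy x a with h | h | h
  · refine (hf x h.le).congr ?_
    filter_upwards [Iio_mem_nhds h] with y hy
    rw [if_pos (le_of_lt hy)]
  · subst h
    have A : ContinuousWithinAt (fun y => if y ≤ x then f y else g y) (Set.Iic x) x := by
      refine (hf x le_rfl).continuousWithinAt.congr (fun y hy => ?_) ?_
      · exact if_pos hy
      · simp
    have B : ContinuousWithinAt (fun y => if y ≤ x then f y else g y) (Set.Ici x) x := by
      refine (hg x le_rfl).continuousWithinAt.congr (fun y hy => ?_) ?_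
      · rcases eq_or_lt_of_le (show x ≤ y from hy) with h | h
        · subst h; simp [h0]
        · exact if_neg (not_le.2 h)
      · simp [h0]
    have := A.union B
    rw [Set.Iic_union_Ici] at this
    exact continuousWithinAt_univ _ _ |>.1 this
  · refine (hg x h.le).congr ?_
    filter_upwards [Ioi_mem_nhds h] with y hy
    rw [if_neg (not_le.2 hy)]

lemma c2_lem (u w : ℝ → ℝ) (U : Set ℝ) (hU : IsOpen U) (c : ℝ)
    (h1 : ∀ x, HasDerivAt u (w x) x) (h2 : ∀ x ∈ U, HasDerivAt w (c - u x ^ 2) x) :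
    ContDiffOn ℝ 2 u U := by
  have hd : deriv u = w := funext fun x => (h1 x).deriv
  have hu : Differentiable ℝ u := fun x => (h1 x).differentiableAt
  rw [show (2 : WithTop ℕ∞) = 1 + 1 by norm_num, contDiffOn_succ_iff_deriv_of_isOpen hU]
  refine ⟨hu.differentiableOn, by simp, ?_⟩
  rw [hd, show (1 : WithTop ℕ∞) = 0 + 1 by norm_num, contDiffOn_succ_iff_deriv_of_isOpen hU]
  refine ⟨fun x hx => (h2 x hx).differentiableAt.differentiableWithinAt, by simp, ?_⟩
  rw [contDiffOn_zero]
  have : Continuous (fun x => c - u x ^ 2) := continuous_const.sub (hu.continuous.pow 2)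
  exact this.continuousOn.congr fun x hx => (h2 x hx).deriv

/-- the time map hits `L` -/
lemma time_lem (b L : ℝ) (hb : 0 < b) (hL : 0 < L) :
    ∃ n, 0 < n ∧ n < b ^ 2 ∧
      ∫ t in (0:ℝ)..1, √(n ^ 3 / (3 * b ^ 4)) *
        (√((b ^ 4 - n ^ 2 + n * (n ^ 3 / (3 * b ^ 4) * t ^ 2)
          - (n ^ 3 / (3 * b ^ 4) * t ^ 2) ^ 2 / 3) / 2))⁻¹ = L := by
  set S : ℝ → ℝ := fun n => n ^ 3 / (3 * b ^ 4) with hS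
  have hScont : Continuous S := by fun_prop
  set g : ℝ → ℝ → ℝ := fun n t => (b ^ 4 - n ^ 2 + n * (S n * t ^ 2) - (S n * t ^ 2) ^ 2 / 3) / 2 with hg
  have hS0 : ∀ n, 0 ≤ n → 0 ≤ S n := fun n hn => by simp only [hS]; positivity
  have hS1 : ∀ n, 0 ≤ n → n < b ^ 2 → S n ≤ n := fun n hn hn2 => by
    simp only [hS]
    rw [div_le_iff₀ (by positivity)]
    have : n * n ^ 2 ≤ n * (b ^ 2) ^ 2 := by gcongr
    nlinarith [show 0 ≤ n * b ^ 4 by positivity]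
  have hglow : ∀ n t, 0 ≤ n → n < b ^ 2 → 0 ≤ t → t ≤ 1 → (b ^ 4 - n ^ 2) / 2 ≤ g n t := by
    intro n t hn hn2 ht ht1
    have h1 : S n * t ^ 2 ≤ n := by
      calc S n * t ^ 2 ≤ S n * 1 := by
            have := hS0 n hn
            gcongr
            nlinarith
        _ ≤ n := by rw [mul_one]; exact hS1 n hn hn2
    have h2 : 0 ≤ S n * t ^ 2 := mul_nonneg (hS0 n hn) (sq_nonneg t)
    simp only [hg]
    nlinarith
  have hpos : ∀ n, 0 ≤ n → n < b ^ 2 → 0 < (b ^ 4 - n ^ 2) / 2 := by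
    intro n hn hn2
    have : n ^ 2 < (b ^ 2) ^ 2 := by gcongr
    nlinarith
  -- choose the upper end
  set a := min (b ^ 2 / 2) (b * (b / 5) * Real.exp (-(b * L))) with ha
  have ha0 : 0 < a := lt_min (by positivity) (by positivity)
  have ha1 : a ≤ b ^ 2 / 2 := min_le_left _ _
  have ha2 : a ≤ b * (b / 5) * Real.exp (-(b * L)) := min_le_right _ _
  set N := √(b ^ 4 - a ^ 2) with hN
  have haa : a ^ 2 ≤ b ^ 4 / 4 := by
    calc a ^ 2 ≤ (b ^ 2 / 2) ^ 2 := by gcongr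
      _ = _ := by ring
  have hN2 : N ^ 2 = b ^ 4 - a ^ 2 := Real.sq_sqrt (by nlinarith [show 0 < b ^ 4 by positivity])
  have hN0 : 0 ≤ N := Real.sqrt_nonneg _
  have hNlt : N < b ^ 2 := by
    apply lt_of_pow_lt_pow_left₀ 2 (by positivity)
    rw [hN2]; nlinarith [show 0 < a ^ 2 by positivity]
  have hNge : b ^ 2 / 2 ≤ N := by
    apply le_of_sq_le_sq _ hN0
    rw [hN2]; nlinarith [show 0 < b ^ 4 by positivity]
  have hSN : b / 5 ≤ √(S N) := by
    apply Real.le_sqrt_of_sq_le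
    simp only [hS]
    rw [le_div_iff₀ (by positivity)]
    calc (b / 5) ^ 2 * (3 * b ^ 4) ≤ (b ^ 2 / 2) ^ 3 := by
          nlinarith [show 0 < b ^ 6 by positivity]
      _ ≤ N ^ 3 := by gcongr
  set F : ℝ → ℝ := fun n => ∫ t in (0:ℝ)..1, √(S n) * (√(g n t))⁻¹ with hF
  have hFN : L ≤ F N := by
    have hsn : 0 < √(S N) := lt_of_lt_of_le (by positivity) hSN
    have hden : ∀ t, 0 ≤ t → 0 < a + b * √(S N) * t := fun t ht => by positivity
    have hint : ∫ t in (0:ℝ)..1, √(S N) * (a + b * √(S N) * t)⁻¹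
        = b⁻¹ * Real.log (a + b * √(S N)) - b⁻¹ * Real.log a := by
      have := intervalIntegral.integral_eq_sub_of_hasDerivAt (a := 0) (b := 1)
        (f := fun t => b⁻¹ * Real.log (a + b * √(S N) * t))
        (f' := fun t => √(S N) * (a + b * √(S N) * t)⁻¹) ?_ ?_
      · rw [this]; simp
      · intro t ht
        rw [Set.uIcc_of_le zero_le_one] at ht
        have h1 : HasDerivAt (fun t => a + b * √(S N) * t) (b * √(S N)) t := by
          simpa using ((hasDerivAt_id t).const_mul (b * √(S N))).const_add a
        have h2 := (h1.log (hden t ht.1).ne').const_mul b⁻¹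
        refine h2.congr_deriv ?_
        have := (hden t ht.1).ne'
        field_simp
      · apply ContinuousOn.intervalIntegrable
        intro t ht
        rw [Set.uIcc_of_le zero_le_one] at ht
        apply ContinuousAt.continuousWithinAt
        have := (hden t ht.1).ne'
        fun_prop (disch := assumption)
    calc L ≤ b⁻¹ * Real.log (a + b * √(S N)) - b⁻¹ * Real.log a := by
          rw [← mul_sub, ← Real.log_div (by positivity) ha0.ne', inv_mul_eq_div,
            le_div_iff₀ hb, Real.le_log_iff_exp_le (by positivity), le_div_iff₀ ha0]
          calc Real.exp (L * b) * a
              ≤ Real.exp (L * b) * (b * (b / 5) * Real.exp (-(b * L))) := by gcongr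
            _ = b * (b / 5) * (Real.exp (L * b) * Real.exp (-(b * L))) := by ring
            _ = b * (b / 5) := by rw [← Real.exp_add]; ring_nf; simp
            _ ≤ b * √(S N) := by gcongr
            _ ≤ a + b * √(S N) := by linarith
      _ = _ := hint.symm
      _ ≤ F N := by
          apply intervalIntegral.integral_mono_on zero_le_one
          · apply ContinuousOn.intervalIntegrable
            intro t ht
            rw [Set.uIcc_of_le zero_le_one] at ht
            apply ContinuousAt.continuousWithinAt
            have := (hden t ht.1).ne'
            fun_prop (disch := assumption)
          · apply ContinuousOn.intervalIntegrable
            intro t ht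
            rw [Set.uIcc_of_le zero_le_one] at ht
            apply ContinuousAt.continuousWithinAt
            have : √(g N t) ≠ 0 :=
              (Real.sqrt_pos.2 ((hpos N hN0 hNlt).trans_le (hglow N t hN0 hNlt ht.1 ht.2))).ne'
            have hgc : Continuous (fun t => √(g N t)) := by simp only [hg]; fun_prop
            exact continuousAt_const.mul (hgc.continuousAt.inv₀ this)
          · intro t ht
            have : 0 < √(g N t) :=
              (Real.sqrt_pos.2 ((hpos N hN0 hNlt).trans_le (hglow N t hN0 hNlt ht.1 ht.2)))
            gcongr
            apply Real.sqrt_le_iff.2 ⟨(hden t ht.1).le, ?_⟩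
            have e1 : g N t ≤ (a ^ 2 + b ^ 2 * (S N * t ^ 2)) / 2 := by
              simp only [hg]
              have : N * (S N * t ^ 2) ≤ b ^ 2 * (S N * t ^ 2) := by
                have := hS0 N hN0
                gcongr
              nlinarith [sq_nonneg (S N * t ^ 2)]
            have e2 : √(S N) ^ 2 = S N := Real.sq_sqrt (hS0 N hN0)
            have e3 : 0 ≤ a * (b * √(S N) * t) := by have := ht.1; positivity
            have e4 : 0 ≤ b ^ 2 * (S N * t ^ 2) := by have := hS0 N hN0; positivity
            have e5 : (a + b * √(S N) * t) ^ 2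
              = a ^ 2 + 2 * (a * (b * √(S N) * t)) + b ^ 2 * (S N * t ^ 2) := by
              rw [← e2]; ring_nf; simp [e2]
            rw [e5]
            nlinarith [sq_nonneg a]
  have hF0 : F 0 = 0 := by simp [hF, hS]
  have hFc : ContinuousOn F (Set.Icc 0 N) := by
    rw [continuousOn_iff_continuous_domRestrict]
    have hG : Continuous (fun q : (Set.Icc 0 N) × ℝ => √(g q.1 (max 0 (min 1 q.2)))) := by
      simp only [hg]; fun_prop
    have := intervalIntegral.continuous_parametric_intervalIntegral_of_continuous'
      (μ := MeasureTheory.volume)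
      (f := fun (n : Set.Icc 0 N) t => √(S n) * (√(g n (max 0 (min 1 t))))⁻¹) ?_ 0 1
    · refine this.congr fun n => ?_
      simp only [hF, Set.domRestrict_apply]
      apply intervalIntegral.integral_congr
      intro t ht
      rw [Set.uIcc_of_le zero_le_one] at ht
      simp only
      rw [min_eq_right ht.2, max_eq_right ht.1]
    · apply Continuous.mul
      · exact (hScont.comp (continuous_subtype_val.comp continuous_fst)).sqrt
      · apply hG.inv₀
        rintro ⟨⟨n, hn⟩, t⟩
        have hn2 := hn.2.trans_lt hNlt
        exact (Real.sqrt_pos.2 ((hpos n hn.1 hn2).trans_le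
          (hglow n _ hn.1 hn2 (le_max_left _ _) (max_le zero_le_one (min_le_left _ _))))).ne'
  obtain ⟨n, hn, hnL⟩ := intermediate_value_Icc hN0 hFc ⟨hF0.trans_le hL.le, hFN⟩
  refine ⟨n, lt_of_le_of_ne hn.1 ?_, hn.2.trans_lt hNlt, hnL⟩
  rintro rfl
  rw [hF0] at hnL
  exact hL.ne hnL

lemma mid_lem (α L : ℝ) (hα : 0 < α) (hL : 0 < L) :
    ∃ v w : ℝ → ℝ, (∀ x, HasDerivAt v (w x) x) ∧ Continuous w ∧ (∀ x, v (-x) = v x) ∧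
      (∀ x, w (-x) = - w x) ∧ (∀ x, |x| < L → HasDerivAt w (α - v x ^ 2) x) ∧
      (∀ x, |x| ≤ L → v x < 0) ∧ 0 < w L ∧ w L ^ 2 = - (2 / 3) * v L ^ 3 := by
  obtain ⟨b, hb, rfl⟩ : ∃ b, 0 < b ∧ α = b ^ 4 := by
    refine ⟨√(√α), Real.sqrt_pos.2 (Real.sqrt_pos.2 hα), ?_⟩
    rw [show (4:ℕ) = 2 * 2 by norm_num, pow_mul, Real.sq_sqrt (Real.sqrt_nonneg _),
      Real.sq_sqrt hα.le]
  obtain ⟨n, hn, hnb, hT⟩ := time_lem b L hb hL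
  set R := n ^ 3 / (3 * b ^ 4) with hR
  have hR0 : 0 < R := by positivity
  have hRn : R < n := by
    rw [hR, div_lt_iff₀ (by positivity)]
    have : n * n ^ 2 ≤ n * (b ^ 2) ^ 2 := by gcongr
    nlinarith [show 0 < n * b ^ 4 by positivity]
  set S := √R with hS
  have hS0 : 0 < S := Real.sqrt_pos.2 hR0
  have hS2 : S ^ 2 = R := Real.sq_sqrt hR0.le
  have hnn : n ^ 2 < b ^ 4 := by
    have : n ^ 2 < (b ^ 2) ^ 2 := by gcongr
    nlinarith
  set q : ℝ → ℝ := fun y => (b ^ 4 - n ^ 2 + n * y - y ^ 2 / 3) / 2 with hq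
  have hqpos : ∀ y, 0 ≤ y → y ≤ R → 0 < q y := by
    intro y hy hy2
    simp only [hq]
    nlinarith
  have hqle : ∀ y, 0 ≤ y → y ≤ R → q y ≤ (b ^ 4 + n * R) / 2 := by
    intro y hy hy2
    simp only [hq]
    nlinarith
  set p : ℝ → ℝ := fun y => √(q (min (y ^ 2) R)) with hp
  have hp1 : ∀ y, 0 < p y := fun y =>
    Real.sqrt_pos.2 (hqpos _ (le_min (sq_nonneg _) hR0.le) (min_le_right _ _))
  have hpc : Continuous p := by simp only [hp, hq]; fun_prop
  obtain ⟨s, hsodd, hsd, hsi⟩ := inv_lem p hpc hp1 (√((b ^ 4 + n * R) / 2))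
    (fun y => Real.sqrt_le_sqrt (hqle _ (le_min (sq_nonneg _) hR0.le) (min_le_right _ _)))
    (fun y => by simp [hp])
  have hsL : s L = S := by
    rw [← hsi S]
    congr 1
    rw [← hT, intervalIntegral.integral_const_mul]
    have := intervalIntegral.mul_integral_comp_mul_left (a := 0) (b := 1)
      (f := fun t => (p t)⁻¹) S
    rw [mul_zero, mul_one] at this
    rw [← this]
    congr 1
    apply intervalIntegral.integral_congr
    intro t ht
    rw [Set.uIcc_of_le zero_le_one] at ht
    have : min ((S * t) ^ 2) R = R * t ^ 2 := by
      rw [mul_pow, hS2, min_eq_left]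
      have := ht.1; have := ht.2
      have : t ^ 2 ≤ 1 := by nlinarith
      nlinarith
    simp only [hp, this, hq]
  have hsm : StrictMono s := strictMono_of_hasDerivAt_pos hsd (fun x => hp1 _)
  have hsc : Continuous s := continuous_iff_continuousAt.2 fun x => (hsd x).continuousAt
  have hw : ∀ x, HasDerivAt (fun x => -n + s x ^ 2) (2 * s x * p (s x)) x := by
    intro x
    simpa using ((hsd x).pow 2).const_add (-n)
  refine ⟨fun x => -n + s x ^ 2, fun x => 2 * s x * p (s x), hw, by fun_prop, ?_, ?_, ?_, ?_, ?_, ?_⟩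
  · intro x; simp [hsodd]
  · intro x
    have : p (-s x) = p (s x) := by simp [hp]
    simp only [hsodd, this]; ring
  · intro x hx
    have h1 : |s x| < S := by
      rw [abs_lt] at hx ⊢
      rw [← hsL, ← hsodd]
      exact ⟨hsm hx.1, hsm hx.2⟩
    have h2 : s x ^ 2 < R := by
      rw [← hS2, ← sq_abs]; gcongr
    have hev : (fun y => 2 * s y * p (s y)) =ᶠ[nhds x] fun y => 2 * s y * √(q (s y ^ 2)) := by
      have : ∀ᶠ y in nhds x, s y ^ 2 < R := (hsc.pow 2).continuousAt.eventually_lt_const h2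
      filter_upwards [this] with y hy
      simp only [hp, min_eq_left hy.le]
    refine HasDerivAt.congr_of_eventuallyEq ?_ hev
    have hq0 := hqpos _ (sq_nonneg (s x)) h2.le
    have hps : p (s x) = √(q (s x ^ 2)) := by simp only [hp, min_eq_left h2.le]
    have hsx := hsd x
    rw [hps] at hsx
    have hqd : ∀ y, HasDerivAt q ((n - 2 * y / 3) / 2) y := by
      intro y
      have := ((((hasDerivAt_id y).const_mul n).const_add (b ^ 4 - n ^ 2)).sub
        (((hasDerivAt_id y).pow 2).div_const 3)).div_const 2
      exact this.congr_deriv (by simp)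
    have h30 : HasDerivAt (fun y => q (s y ^ 2))
        ((n - 2 * s x ^ 2 / 3) / 2 * (2 * s x * √(q (s x ^ 2)))) x :=
      HasDerivAt.comp (h₂ := q) (h := fun y => s y ^ 2) x (hqd (s x ^ 2))
        ((hsx.pow 2).congr_deriv (by simp))
    have h3 := h30.sqrt hq0.ne'
    have h4 := (hsx.const_mul 2).mul h3
    refine h4.congr_deriv ?_
    have hr := Real.sq_sqrt hq0.le
    have hr0 := (Real.sqrt_pos.2 hq0).ne'
    set r := √(q (s x ^ 2)) with hrr
    have : 2 * r * r + 2 * s x * ((n - 2 * s x ^ 2 / 3) / 2 * (2 * s x * r) / (2 * r))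
       = 2 * r ^ 2 + s x ^ 2 * (n - 2 * s x ^ 2 / 3) := by field_simp
    trans 2 * r ^ 2 + s x ^ 2 * (n - 2 * s x ^ 2 / 3)
    · rw [← this]
    · rw [hr]; simp only [hq]; ring
  · intro x hx
    have h1 : |s x| ≤ S := by
      rw [abs_le] at hx ⊢
      rw [← hsL, ← hsodd]
      exact ⟨hsm.monotone hx.1, hsm.monotone hx.2⟩
    have h2 : s x ^ 2 ≤ R := by
      rw [← hS2, ← sq_abs]; gcongr
    simp only
    linarith
  · have := hp1 (s L)
    simp only [hsL] at this ⊢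
    positivity
  · simp only [hsL]
    rw [mul_pow, mul_pow, hS2]
    simp only [hp, hS2, min_self]
    rw [Real.sq_sqrt (hqpos R hR0.le le_rfl).le]
    have : n ^ 3 = 3 * b ^ 4 * R := by rw [hR]; field_simp
    simp only [hq]
    linear_combination (-(2:ℝ)/3) * this

theorem statement19 (α L : ℝ) (hα : 0 < α) (hL : 0 < L) :
    ∃ u : ℝ → ℝ,
      Differentiable ℝ u ∧
      Continuous (deriv u) ∧
      ContDiffOn ℝ 2 u (({-L, L} : Set ℝ)ᶜ) ∧
      (∀ x : ℝ, u (-x) = u x) ∧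
      (∀ x : ℝ, |x| < L → deriv (deriv u) x + (u x) ^ 2 = α) ∧
      (∀ x : ℝ, L < |x| → deriv (deriv u) x + (u x) ^ 2 = 0) ∧
      (∀ x : ℝ, u x < 0) ∧
      Tendsto u atTop (nhds 0) ∧ Tendsto u atBot (nhds 0) := by
  obtain ⟨v, w, hv, hwc, hve, hwo, hw, hneg, hwL, hE⟩ := mid_lem α L hα hL
  have hvL : v L < 0 := hneg L (by rw [abs_of_pos hL])
  obtain ⟨d, hd, hd1, hd2⟩ : ∃ d, 0 < d ∧ v L = -6 / d ^ 2 ∧ w L = 12 / d ^ 3 := by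
    refine ⟨√(6 / (-v L)), ?_, ?_, ?_⟩
    · apply Real.sqrt_pos.2; apply div_pos <;> linarith
    · rw [Real.sq_sqrt (div_nonneg (by norm_num) (by linarith))]
      have := hvL.ne
      field_simp
    · have h0 : 0 < √(6 / (-v L)) := by
        apply Real.sqrt_pos.2; apply div_pos <;> linarith
      rw [← pow_left_inj₀ hwL.le (by positivity) two_ne_zero, hE, div_pow, ← pow_mul,
        mul_comm 3 2, pow_mul, Real.sq_sqrt (div_nonneg (by norm_num) (by linarith))]
      have := hvL.ne
      field_simp
      norm_num
  -- outer pieces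
  set o : ℝ → ℝ := fun x => -6 / (x - L + d) ^ 2 with ho
  set o' : ℝ → ℝ := fun x => 12 / (x - L + d) ^ 3 with ho'
  have od : ∀ x, L ≤ x → HasDerivAt o (o' x) x := by
    intro x hx
    have h0 : x - L + d ≠ 0 := by linarith
    have h1 : HasDerivAt (fun x => x - L + d) 1 x := ((hasDerivAt_id x).sub_const L).add_const d
    have := ((h1.pow 2).inv (pow_ne_zero 2 h0)).const_mul (-6)
    refine this.congr_deriv ?_
    simp only [ho', Pi.pow_apply]
    field_simp
    norm_num
    ring
  have od' : ∀ x, L ≤ x → HasDerivAt o' (0 - o x ^ 2) x := by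
    intro x hx
    have h0 : x - L + d ≠ 0 := by linarith
    have h1 : HasDerivAt (fun x => x - L + d) 1 x := ((hasDerivAt_id x).sub_const L).add_const d
    have := ((h1.pow 3).inv (pow_ne_zero 3 h0)).const_mul 12
    refine this.congr_deriv ?_
    simp only [ho, Pi.pow_apply]
    field_simp
    norm_num
    ring
  have oL : v L = o L := by simp [ho, hd1]
  have oL' : w L = o' L := by simp [ho', hd2]
  have ond : ∀ x, x ≤ -L → HasDerivAt (fun x => o (-x)) (- o' (-x)) x := by
    intro x hx
    have := (od (-x) (by linarith)).comp x (hasDerivAt_neg x)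
    simpa [Function.comp_def] using this
  have ond' : ∀ x, x ≤ -L → HasDerivAt (fun x => - o' (-x)) (0 - o (-x) ^ 2) x := by
    intro x hx
    exact ((od' (-x) (by linarith)).comp x (hasDerivAt_neg x)).neg.congr_deriv (by ring)
  have hLL : -L ≤ L := by linarith
  set u1 : ℝ → ℝ := fun x => if x ≤ L then v x else o x with hu1
  set w1 : ℝ → ℝ := fun x => if x ≤ L then w x else o' x with hw1
  have d1 : ∀ x, HasDerivAt u1 (w1 x) x := glue_d v o w o' L (fun x _ => hv x) od oL oL'
  have c1 : ∀ x, ContinuousAt w1 x := glue_c w o' L (fun x _ => hwc.continuousAt)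
    (fun x hx => (od' x hx).continuousAt) oL'
  set u : ℝ → ℝ := fun x => if x ≤ -L then o (-x) else u1 x with hu
  set W : ℝ → ℝ := fun x => if x ≤ -L then - o' (-x) else w1 x with hW
  have d2 : ∀ x, HasDerivAt u (W x) x := by
    apply glue_d (fun x => o (-x)) u1 (fun x => - o' (-x)) w1 (-L) ond (fun x _ => d1 x)
    · simp only [hu1, if_pos hLL, neg_neg, hve, oL]
    · simp only [hw1, if_pos hLL, neg_neg, hwo, oL']
  have c2 : ∀ x, ContinuousAt W x := by
    apply glue_c (fun x => - o' (-x)) w1 (-L) (fun x hx => (ond' x hx).continuousAt) (fun x _ => c1 x)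
    simp only [hw1, if_pos hLL, neg_neg, hwo, oL']
  have hdu : deriv u = W := funext fun x => (d2 x).deriv
  -- second derivatives
  have m2 : ∀ x ∈ Set.Ioo (-L) L, HasDerivAt W (α - u x ^ 2) x := by
    intro x hx
    have e : u x = v x := by simp only [hu, hu1, if_neg (not_le.2 hx.1), if_pos hx.2.le]
    rw [e]
    refine (hw x (abs_lt.2 hx)).congr_of_eventuallyEq ?_
    filter_upwards [Ioo_mem_nhds hx.1 hx.2] with y hy
    simp only [hW, hw1, if_neg (not_le.2 hy.1), if_pos hy.2.le]
  have r2 : ∀ x ∈ Set.Ioi L, HasDerivAt W (0 - u x ^ 2) x := by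
    intro x hx
    rw [Set.mem_Ioi] at hx
    have hN : ∀ y, L < y → ¬ y ≤ -L := fun y hy => by linarith
    have e : u x = o x := by simp only [hu, hu1, if_neg (hN x hx), if_neg (not_le.2 hx)]
    rw [e]
    refine (od' x (le_of_lt hx)).congr_of_eventuallyEq ?_
    filter_upwards [Ioi_mem_nhds hx] with y hy
    rw [Set.mem_Ioi] at hy
    simp only [hW, hw1, if_neg (hN y hy), if_neg (not_le.2 hy)]
  have l2 : ∀ x ∈ Set.Iio (-L), HasDerivAt W (0 - u x ^ 2) x := by
    intro x hx
    rw [Set.mem_Iio] at hx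
    have e : u x = o (-x) := by simp only [hu, if_pos (le_of_lt hx)]
    rw [e]
    refine (ond' x (le_of_lt hx)).congr_of_eventuallyEq ?_
    filter_upwards [Iio_mem_nhds hx] with y hy
    rw [Set.mem_Iio] at hy
    simp only [hW, if_pos (le_of_lt hy)]
  have heven : ∀ x, u (-x) = u x := by
    intro x
    simp only [hu, hu1]
    rcases lt_trichotomy x L with h | h | h
    · rcases lt_trichotomy x (-L) with h' | h' | h'
      · rw [if_neg (by linarith), if_neg (by linarith), if_pos h'.le]
      · subst h'
        rw [if_neg (by linarith), if_pos (by linarith), if_pos le_rfl, neg_neg, oL]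
      · rw [if_neg (by linarith), if_pos (by linarith), if_neg (by linarith), if_pos h.le, hve]
    · subst h
      rw [if_pos le_rfl, if_neg (by linarith), if_pos le_rfl, neg_neg, oL]
    · rw [if_pos (by linarith), if_neg (by linarith), if_neg (by linarith), neg_neg]
  have oneg : ∀ x, L ≤ x → o x < 0 := by
    intro x hx
    have : 0 < x - L + d := by linarith
    exact div_neg_of_neg_of_pos (by norm_num) (by positivity)
  have htop : Tendsto u atTop (nhds 0) := by
    have h1 : Tendsto o atTop (nhds 0) := by
      apply Tendsto.const_div_atTop
      apply (tendsto_pow_atTop two_ne_zero).comp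
      simp only [sub_add]
      exact tendsto_id.atTop_add tendsto_const_nhds
    refine h1.congr' ?_
    filter_upwards [eventually_gt_atTop L] with x hx
    simp only [hu, hu1]
    rw [if_neg (by linarith), if_neg (by linarith)]
  refine ⟨u, fun x => (d2 x).differentiableAt, ?_, ?_, heven, ?_, ?_, ?_, htop, ?_⟩
  · rw [hdu]; exact continuous_iff_continuousAt.2 c2
  · intro x hx
    apply ContDiffAt.contDiffWithinAt
    simp only [Set.mem_compl_iff, Set.mem_insert_iff, Set.mem_singleton_iff, not_or] at hx
    rcases lt_or_gt_of_ne hx.1 with h | h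
    · exact (c2_lem u W _ isOpen_Iio 0 d2 l2).contDiffAt (Iio_mem_nhds h)
    rcases lt_or_gt_of_ne hx.2 with h' | h'
    · exact (c2_lem u W _ isOpen_Ioo α d2 m2).contDiffAt (Ioo_mem_nhds h h')
    · exact (c2_lem u W _ isOpen_Ioi 0 d2 r2).contDiffAt (Ioi_mem_nhds h')
  · intro x hx
    rw [hdu, (m2 x (abs_lt.1 hx)).deriv]; ring
  · intro x hx
    rw [hdu]
    rcases lt_abs.1 hx with h | h
    · rw [(r2 x h).deriv]; ring
    · rw [(l2 x (by simp only [Set.mem_Iio]; linarith)).deriv]; ring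
  · intro x
    simp only [hu, hu1]
    split_ifs with h h'
    · exact oneg _ (by linarith)
    · exact hneg x (abs_le.2 ⟨by linarith, h'⟩)
    · exact oneg _ (by linarith)
  · have := htop.comp tendsto_neg_atBot_atTop
    exact this.congr heven
end
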